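/- There exist a constant C > 0 and a natural number M such that for every λ ∈ ℂ with Im λ > 0 and every t ≥ 1/2, |b_λ(t)| ≤ C (1+|λ|)^M e^{−(Im λ + ρ)t}. -/

import Mathlib

open Complex MeasureTheory Set

noncomputable section

/-- Gauss hypergeometric function ₂F₁ as a power series sum. -/
def hyp (a b c x : ℂ) : ℂ :=
  ∑' n : ℕ, (ascPochhammer ℂ n).eval a * (ascPochhammer ℂ n).eval b /
    ((ascPochhammer ℂ n).eval c * (n.factorial : ℂ)) * x ^ n

/-- ρ = (m₁ + 2 m₂)/2 -/
def rho (m₁ m₂ : ℕ) : ℝ := ((m₁ : ℝ) + 2 * m₂) / 2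

/-- Δ(t) = (2 sinh t)^(m₁+m₂) (2 cosh t)^(m₂) -/
def Del (m₁ m₂ : ℕ) (t : ℝ) : ℝ :=
  (2 * Real.sinh t) ^ (m₁ + m₂) * (2 * Real.cosh t) ^ m₂

/-- The solution Φ_λ. -/
def Phi (m₁ m₂ : ℕ) (l : ℂ) (t : ℝ) : ℂ :=
  ((2 * Real.cosh t : ℝ) : ℂ) ^ (Complex.I * l - (rho m₁ m₂ : ℂ)) *
    hyp (((rho m₁ m₂ : ℂ) - Complex.I * l) / 2) (((m₁ : ℂ) + 2) / 4 - Complex.I * l / 2)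
      (1 - Complex.I * l) ((((Real.cosh t) ^ 2 : ℝ) : ℂ))⁻¹

/-- The function b_λ. -/
def bfun (m₁ m₂ : ℕ) (l : ℂ) (t : ℝ) : ℂ :=
  (2 : ℂ) ^ (-(rho m₁ m₂ : ℂ) - 1 - Complex.I * l) *
    (Complex.Gamma (((rho m₁ m₂ : ℂ) - Complex.I * l) / 2) *
      Complex.Gamma (((m₁ : ℂ) + 2) / 4 - Complex.I * l / 2) /
      (Complex.Gamma (((m₁ : ℂ) + (m₂ : ℂ) + 1) / 2) * Complex.Gamma (1 - Complex.I * l))) *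
    Phi m₁ m₂ l t

/-!
With `x = (cosh t)⁻²` and `μ = -iλ`, the claim is that `Γ(a) Γ(b) ₂F₁(a, b; c; x) / Γ(c)`, where
`a`, `b` are constants plus `μ / 2` and `c = 1 + μ`, is `O((1 + |μ|) ^ M (1 + √(1 - x)) ^ (-Re μ))`:
since `√(1 - x) = tanh t` and `2 cosh t (1 + tanh t) = 2 exp t`, the elementary factors of `b_λ(t)`
turn this into the exponential bound.

If `c` is replaced by `γ + μ` with `γ` large, the estimate holds without the polynomial factor:
`Γ(a) / Γ(c - b)` is bounded through a Beta integral, Euler's integrand for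
`Γ(b) Γ(c - b) ₂F₁(a, b; c; x) / Γ(c)` is, in absolute value, `(u (1 - u) / (1 - x u)) ^ (Re μ / 2)`
up to factors independent of `μ`, and the maximum over `u` of the base is `(1 + √(1 - x))⁻²`. The
contiguous relation in `c` then lowers `γ` to `1`; its coefficients are polynomials in `μ` divided
by `1 - x`, and `1 - x` is bounded away from `0` for `t` bounded away from `0`.
-/

section RegularizedSeries

variable (a b c : ℂ)

/-- The `n`-th term of the power series of the regularized hypergeometric function
`₂F₁(a, b; c; z) / Γ(c)`. -/
def regularizedGaussHGTerm (z : ℂ) (n : ℕ) : ℂ :=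
  (ascPochhammer ℂ n).eval a * (ascPochhammer ℂ n).eval b / (n.factorial : ℂ) *
    (Gamma (c + n))⁻¹ * z ^ n

theorem hasSum_regularizedGaussHGTerm {z : ℂ} (hz : ‖z‖ < 1) :
    HasSum (regularizedGaussHGTerm a b c z) (regularizedGaussHGFun a b c z) := by
  have hball : z ∈ Metric.eball 0 (regularizedGaussHGFunSeries a b c).radius := by
    rw [mem_eball_zero_iff]
    refine lt_of_lt_of_le ?_ (radius_regularizedGaussHGFunSeries_ge_one a b c)
    rwa [← ofReal_norm, ENNReal.ofReal_lt_one]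
  refine ((regularizedGaussHGFunSeries a b c).hasSum hball).congr_fun fun n => ?_
  rw [FormalMultilinearSeries.apply_eq_pow_smul_coeff, coeff_regularizedGaussHGFunSeries,
    smul_eq_mul, regularizedGaussHGTerm]
  field_simp

theorem regularizedGaussHGTerm_eq_add_mul_add_one (z : ℂ) (n : ℕ) :
    regularizedGaussHGTerm a b c z n = (c + n) * regularizedGaussHGTerm a b (c + 1) z n := by
  rw [regularizedGaussHGTerm, regularizedGaussHGTerm,
    one_div_Gamma_eq_self_mul_one_div_Gamma_add_one, add_right_comm]
  ring

theorem succ_mul_regularizedGaussHGTerm_succ (z : ℂ) (n : ℕ) :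
    ((n + 1 : ℕ) : ℂ) * regularizedGaussHGTerm a b (c + 1) z (n + 1) =
      z * (regularizedGaussHGTerm a b c z n -
        (2 * c + 1 - a - b) * regularizedGaussHGTerm a b (c + 1) z n +
        (c + 1 - a) * (c + 1 - b) * regularizedGaussHGTerm a b (c + 2) z n) := by
  have hc : c + 1 + 1 = c + 2 := by ring
  have hcn : c + 1 + ((n : ℂ) + 1) = c + 2 + n := by ring
  have hn : (n : ℂ) + 1 ≠ 0 := by exact_mod_cast n.succ_ne_zero
  have hfact : (n.factorial : ℂ) ≠ 0 := by exact_mod_cast n.factorial_ne_zero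
  have h₀ := regularizedGaussHGTerm_eq_add_mul_add_one a b c z n
  have h₁ := regularizedGaussHGTerm_eq_add_mul_add_one a b (c + 1) z n
  rw [hc] at h₁
  rw [h₀, h₁]
  simp only [regularizedGaussHGTerm, ascPochhammer_succ_eval, Nat.factorial_succ, Nat.cast_mul,
    Nat.cast_add, Nat.cast_one, hcn]
  field_simp
  ring

-- Both relations below sum `n ↦ n * regularizedGaussHGTerm a b (c + 1) z n`, the series of
-- `z * (d/dz) F(c + 1)`: once termwise, once after shifting the index.
theorem regularizedGaussHGFun_contiguous {z : ℂ} (hz : ‖z‖ < 1) :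
    (1 - z) * regularizedGaussHGFun a b c z =
      (c - (2 * c + 1 - a - b) * z) * regularizedGaussHGFun a b (c + 1) z +
        (c + 1 - a) * (c + 1 - b) * z * regularizedGaussHGFun a b (c + 2) z := by
  have h₀ := hasSum_regularizedGaussHGTerm a b c hz
  have h₁ := hasSum_regularizedGaussHGTerm a b (c + 1) hz
  have h₂ := hasSum_regularizedGaussHGTerm a b (c + 2) hz
  have termwise : HasSum (fun n : ℕ => n * regularizedGaussHGTerm a b (c + 1) z n)
      (regularizedGaussHGFun a b c z - c * regularizedGaussHGFun a b (c + 1) z) := by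
    refine (h₀.sub (h₁.mul_left c)).congr_fun fun n => ?_
    rw [regularizedGaussHGTerm_eq_add_mul_add_one a b c]
    ring
  have shifted : HasSum (fun n : ℕ => n * regularizedGaussHGTerm a b (c + 1) z n)
      (z * (regularizedGaussHGFun a b c z -
        (2 * c + 1 - a - b) * regularizedGaussHGFun a b (c + 1) z +
        (c + 1 - a) * (c + 1 - b) * regularizedGaussHGFun a b (c + 2) z)) := by
    rw [← hasSum_nat_add_iff' 1]
    simp only [Finset.range_one, Finset.sum_singleton, Nat.cast_zero, zero_mul, sub_zero]
    exact (((h₀.sub (h₁.mul_left (2 * c + 1 - a - b))).add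
      (h₂.mul_left ((c + 1 - a) * (c + 1 - b)))).mul_left z).congr_fun
      (succ_mul_regularizedGaussHGTerm_succ a b c z)
  linear_combination termwise.unique shifted

theorem hyp_div_Gamma_eq_regularizedGaussHGFun (x : ℂ) (hc : ∀ k : ℕ, c ≠ -k) :
    hyp a b c x / Gamma c = regularizedGaussHGFun a b c x := by
  rw [← ordinaryHypergeometric_div_Gamma_eq hc, ordinaryHypergeometric_eq_tsum, hyp]
  congr 1
  refine tsum_congr fun n => ?_
  rw [smul_eq_mul]
  ring

end RegularizedSeries

section EulerIntegral

theorem hasSum_one_sub_cpow_neg (a : ℂ) {z : ℂ} (hz : ‖z‖ < 1) :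
    HasSum (fun n : ℕ => (ascPochhammer ℂ n).eval a / (n.factorial : ℂ) * z ^ n)
      ((1 - z) ^ (-a)) := by
  have hball : z ∈ Metric.eball 0 1 := by
    rwa [mem_eball_zero_iff, ← ofReal_norm, ENNReal.ofReal_lt_one]
  have h := (one_div_one_sub_cpow_hasFPowerSeriesOnBall_zero a).hasSum hball
  rw [zero_add, one_div, ← cpow_neg] at h
  refine h.congr_fun fun n => ?_
  have hfact : (n.factorial : ℂ) ≠ 0 := by exact_mod_cast n.factorial_ne_zero
  have hmulti : (n.factorial : ℂ) * Ring.multichoose a n = (ascPochhammer ℂ n).eval a := by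
    rw [← nsmul_eq_mul, Ring.factorial_nsmul_multichoose_eq_ascPochhammer,
      Polynomial.ascPochhammer_smeval_eq_eval]
  rw [← hmulti, mul_div_cancel_left₀ _ hfact, Ring.multichoose_eq]
  simp [FormalMultilinearSeries.ofScalars]

/-- The integrand of Euler's integral for `Γ(b) Γ(d) ₂F₁(a, b; b + d; z) / Γ(b + d)`. -/
def eulerIntegrand (a b d z : ℂ) (u : ℝ) : ℂ :=
  (u : ℂ) ^ (b - 1) * (1 - (u : ℂ)) ^ (d - 1) * (1 - z * u) ^ (-a)

theorem integral_beta_mul_pow (b d : ℂ) (n : ℕ) :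
    ∫ u : ℝ in 0..1, (u : ℂ) ^ (b - 1) * (1 - (u : ℂ)) ^ (d - 1) * (u : ℂ) ^ n =
      betaIntegral (b + n) d := by
  refine intervalIntegral.integral_congr_ae (.of_forall fun u hu => ?_)
  rw [uIoc_of_le zero_le_one] at hu
  have hu0 : (u : ℂ) ≠ 0 := by exact_mod_cast hu.1.ne'
  rw [show b + n - 1 = (b - 1) + n by ring, cpow_add _ _ hu0, cpow_natCast]
  ring

theorem hasSum_integral_eulerIntegrand (a : ℂ) {b d z : ℂ} (hb : 0 < b.re) (hd : 0 < d.re)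
    (hz : ‖z‖ < 1) :
    HasSum (fun n : ℕ => (ascPochhammer ℂ n).eval a / (n.factorial : ℂ) * z ^ n *
      betaIntegral (b + n) d) (∫ u : ℝ in 0..1, eulerIntegrand a b d z u) := by
  set w : ℝ → ℂ := fun u => (u : ℂ) ^ (b - 1) * (1 - (u : ℂ)) ^ (d - 1) with hw
  set p : ℕ → ℂ := fun n => (ascPochhammer ℂ n).eval a / (n.factorial : ℂ) with hp
  have hw_int : IntervalIntegrable w volume 0 1 := betaIntegral_convergent hb hd
  have hp_summable : Summable fun n => ‖p n * z ^ n‖ :=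
    (hasSum_one_sub_cpow_neg a hz).summable.norm
  have hu_norm {u : ℝ} (hu : u ∈ uIoc (0 : ℝ) 1) : ‖(u : ℂ)‖ ≤ 1 := by
    rw [uIoc_of_le zero_le_one] at hu
    rw [norm_real, Real.norm_of_nonneg hu.1.le]
    exact hu.2
  have key : HasSum (fun n => ∫ u : ℝ in 0..1, w u * (p n * (z * u) ^ n))
      (∫ u : ℝ in 0..1, eulerIntegrand a b d z u) := by
    refine intervalIntegral.hasSum_integral_of_dominated_convergence
      (fun n u => ‖w u‖ * ‖p n * z ^ n‖)
      (fun n => hw_int.def'.aestronglyMeasurable.mul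
        (Continuous.aestronglyMeasurable (by fun_prop)))
      (fun n => .of_forall fun u hu => ?_) (.of_forall fun u _ => hp_summable.mul_left _) ?_
      (.of_forall fun u hu => ?_)
    · rw [norm_mul, mul_pow, ← mul_assoc, norm_mul _ ((u : ℂ) ^ n), norm_pow]
      gcongr
      exact mul_le_of_le_one_right (norm_nonneg _) (pow_le_one₀ (norm_nonneg _) (hu_norm hu))
    · simp_rw [tsum_mul_left]
      exact hw_int.norm.mul_const _
    · refine (hasSum_one_sub_cpow_neg a ?_).mul_left _
      rw [norm_mul]
      exact (mul_le_of_le_one_right (norm_nonneg _) (hu_norm hu)).trans_lt hz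
  refine key.congr_fun fun n => ?_
  rw [← integral_beta_mul_pow, ← intervalIntegral.integral_const_mul]
  congr 1 with u
  rw [hw, hp]
  ring

theorem integral_eulerIntegrand (a : ℂ) {b d z : ℂ} (hb : 0 < b.re) (hd : 0 < d.re)
    (hz : ‖z‖ < 1) :
    ∫ u : ℝ in 0..1, eulerIntegrand a b d z u =
      Gamma b * Gamma d * regularizedGaussHGFun a b (b + d) z := by
  refine (hasSum_integral_eulerIntegrand a hb hd hz).unique
    (((hasSum_regularizedGaussHGTerm a b (b + d) hz).mul_left
      (Gamma b * Gamma d)).congr_fun fun n => ?_)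
  have hbn : 0 < (b + n).re := by
    rw [add_re, natCast_re]
    positivity
  have hpole (k : ℕ) : b ≠ -k := by
    rintro rfl
    rw [neg_re, natCast_re, Left.neg_pos_iff] at hb
    exact hb.not_ge k.cast_nonneg
  have hΓ := Gamma_ne_zero_of_re_pos hb
  rw [betaIntegral_eq_Gamma_mul_div _ _ hbn hd, regularizedGaussHGTerm,
    ← Gamma_add_nat_div_Gamma_eq b hpole, add_right_comm b d]
  field_simp

-- The right-hand side is the maximum over `u`, attained at `u = 1 / (1 + √(1 - x))`.
theorem mul_one_sub_div_one_sub_mul_le {u x : ℝ} (hu : u ∈ Icc (0 : ℝ) 1) (hx : x ∈ Ico (0 : ℝ) 1) :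
    u * (1 - u) / (1 - x * u) ≤ (1 + √(1 - x)) ^ (-2 : ℝ) := by
  obtain ⟨hu0, hu1⟩ := hu
  obtain ⟨hx0, hx1⟩ := hx
  have hden : 0 < 1 - x * u := by nlinarith
  have hroot : √(1 - x) ^ 2 = 1 - x := Real.sq_sqrt (by linarith)
  rw [Real.rpow_neg (by positivity), Real.rpow_two, ← one_div,
    div_le_div_iff₀ hden (by positivity)]
  nlinarith [sq_nonneg (1 - u * (1 + √(1 - x)))]

theorem norm_eulerIntegrand {u x : ℝ} (a b d : ℂ) (hu : u ∈ Ioo (0 : ℝ) 1)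
    (hx : x ∈ Ico (0 : ℝ) 1) :
    ‖eulerIntegrand a b d x u‖ =
      u ^ (b.re - 1) * (1 - u) ^ (d.re - 1) * (1 - x * u) ^ (-a.re) := by
  have h1u : 0 < 1 - u := sub_pos.2 hu.2
  have hden : 0 < 1 - x * u := by nlinarith [hu.1, hu.2, hx.1, hx.2]
  have e1 : 1 - (u : ℂ) = (1 - u : ℝ) := by push_cast; rfl
  have e2 : 1 - (x : ℂ) * u = (1 - x * u : ℝ) := by push_cast; rfl
  rw [eulerIntegrand, norm_mul, norm_mul, e1, e2, norm_cpow_eq_rpow_re_of_pos hu.1,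
    norm_cpow_eq_rpow_re_of_pos h1u, norm_cpow_eq_rpow_re_of_pos hden]
  simp

theorem norm_eulerIntegrand_le {a b d : ℂ} {σ u x : ℝ} (hσ : 0 ≤ σ) (ha : σ ≤ a.re)
    (hd : σ + 1 ≤ d.re) (hu : u ∈ Ioo (0 : ℝ) 1) (hx : x ∈ Ico (0 : ℝ) 1) :
    ‖eulerIntegrand a b d x u‖ ≤
      u ^ (b.re - σ - 1) * ((1 - x) ^ (σ - a.re) * (1 + √(1 - x)) ^ (-2 * σ)) := by
  have hu0 : 0 < u := hu.1
  have h1u : 0 < 1 - u := sub_pos.2 hu.2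
  have h1x : 0 < 1 - x := sub_pos.2 hx.2
  have hden : 1 - x ≤ 1 - x * u := by nlinarith [hu.2, hx.1]
  have hden0 : 0 < 1 - x * u := h1x.trans_le hden
  have hpeak : (u * (1 - u) / (1 - x * u)) ^ σ ≤ (1 + √(1 - x)) ^ (-2 * σ) := by
    rw [Real.rpow_mul (by positivity)]
    gcongr
    exact mul_one_sub_div_one_sub_mul_le ⟨hu0.le, hu.2.le⟩ hx
  calc ‖eulerIntegrand a b d x u‖
      = u ^ (b.re - σ - 1) * (1 - u) ^ (d.re - σ - 1) *
          ((1 - x * u) ^ (σ - a.re) * (u * (1 - u) / (1 - x * u)) ^ σ) := by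
        rw [norm_eulerIntegrand a b d hu hx, Real.div_rpow (by positivity) hden0.le,
          Real.mul_rpow hu0.le h1u.le, show b.re - 1 = (b.re - σ - 1) + σ by ring,
          show d.re - 1 = (d.re - σ - 1) + σ by ring, show -a.re = σ - a.re - σ by ring,
          Real.rpow_add hu0, Real.rpow_add h1u, Real.rpow_sub hden0]
        ring
    _ ≤ u ^ (b.re - σ - 1) * 1 * ((1 - x) ^ (σ - a.re) * (1 + √(1 - x)) ^ (-2 * σ)) := by
        gcongr ?_ * ?_ * (?_ * ?_)
        · exact Real.rpow_le_one h1u.le (by linarith) (by linarith)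
        · exact Real.rpow_le_rpow_of_nonpos h1x hden (by linarith)
    _ = _ := by rw [mul_one]

theorem norm_integral_eulerIntegrand_le {a b d : ℂ} {σ x : ℝ} (hσ : 0 ≤ σ) (ha : σ ≤ a.re)
    (hb : σ < b.re) (hd : σ + 1 ≤ d.re) (hx : x ∈ Ico (0 : ℝ) 1) :
    ‖∫ u : ℝ in 0..1, eulerIntegrand a b d x u‖ ≤
      (1 - x) ^ (σ - a.re) * (1 + √(1 - x)) ^ (-2 * σ) / (b.re - σ) := by
  have hexp : -1 < b.re - σ - 1 := by linarith
  have hint : ∫ u : ℝ in 0..1, u ^ (b.re - σ - 1) = (b.re - σ)⁻¹ := by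
    rw [integral_rpow (Or.inl hexp), sub_add_cancel, Real.one_rpow,
      Real.zero_rpow (by linarith), sub_zero, one_div]
  have hbound := intervalIntegral.norm_integral_le_of_norm_le (μ := volume) zero_le_one
    (f := eulerIntegrand a b d x)
    (by
      filter_upwards [compl_mem_ae_iff.2 (measure_singleton (1 : ℝ))] with u hu1 hu
      exact norm_eulerIntegrand_le hσ ha hd ⟨hu.1, lt_of_le_of_ne hu.2 hu1⟩ hx)
    ((intervalIntegral.intervalIntegrable_rpow' hexp).mul_const _)
  rwa [intervalIntegral.integral_mul_const, hint, inv_mul_eq_div] at hbound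

theorem norm_Gamma_le_norm_Gamma_add_div {z w : ℂ} (hz : 0 < z.re) (hw : 1 ≤ w.re) :
    ‖Gamma z‖ ≤ ‖Gamma (z + w)‖ / (z.re * ‖Gamma w‖) := by
  have hw0 : 0 < w.re := by linarith
  have hΓw : 0 < ‖Gamma w‖ := norm_pos_iff.2 (Gamma_ne_zero_of_re_pos hw0)
  have hbeta : ‖betaIntegral z w‖ ≤ 1 / z.re := by
    simpa [eulerIntegrand, betaIntegral] using
      norm_integral_eulerIntegrand_le (a := 0) (b := z) (d := w) (σ := 0) (x := 0) le_rfl le_rfl hz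
        (by simpa using hw) (by simp)
  rw [← div_div, le_div_iff₀ hΓw, ← norm_mul, Gamma_mul_Gamma_eq_betaIntegral hz hw0, norm_mul,
    ← mul_one_div]
  gcongr

theorem norm_Gamma_mul_Gamma_mul_regularizedGaussHGFun_le {a b c : ℂ} {σ x : ℝ} (hσ : 0 ≤ σ)
    (ha : σ < a.re) (hb : σ < b.re) (hc : a.re + b.re + 1 ≤ c.re) (hx : x ∈ Ico (0 : ℝ) 1) :
    ‖Gamma a * Gamma b * regularizedGaussHGFun a b c x‖ ≤
      (1 - x) ^ (σ - a.re) * (1 + √(1 - x)) ^ (-2 * σ) /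
        ((a.re - σ) * (b.re - σ) * ‖Gamma (c - a - b)‖) := by
  have hw : 1 ≤ (c - a - b).re := by
    simp only [sub_re]
    linarith
  have hd : σ + 1 ≤ (c - b).re := by
    rw [sub_re]
    linarith
  have hΓw : 0 < ‖Gamma (c - a - b)‖ := norm_pos_iff.2 (Gamma_ne_zero_of_re_pos (by linarith))
  have hΓ : ‖Gamma a‖ ≤ ‖Gamma (c - b)‖ / ((a.re - σ) * ‖Gamma (c - a - b)‖) := by
    have h := norm_Gamma_le_norm_Gamma_add_div (by linarith : 0 < a.re) hw
    rw [show a + (c - a - b) = c - b by ring] at h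
    refine h.trans ?_
    have := sub_pos.2 ha
    gcongr
    linarith
  have hxn : ‖(x : ℂ)‖ < 1 := by
    rw [norm_real, Real.norm_of_nonneg hx.1]
    exact hx.2
  have hEuler := norm_integral_eulerIntegrand_le hσ ha.le hb hd hx
  rw [integral_eulerIntegrand a (by linarith) (by linarith) hxn, add_sub_cancel,
    norm_mul, norm_mul] at hEuler
  rw [norm_mul, norm_mul]
  calc ‖Gamma a‖ * ‖Gamma b‖ * ‖regularizedGaussHGFun a b c x‖
      ≤ ‖Gamma (c - b)‖ / ((a.re - σ) * ‖Gamma (c - a - b)‖) * ‖Gamma b‖ *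
          ‖regularizedGaussHGFun a b c x‖ := by gcongr
    _ = ‖Gamma b‖ * ‖Gamma (c - b)‖ * ‖regularizedGaussHGFun a b c x‖ /
          ((a.re - σ) * ‖Gamma (c - a - b)‖) := by ring
    _ ≤ (1 - x) ^ (σ - a.re) * (1 + √(1 - x)) ^ (-2 * σ) / (b.re - σ) /
          ((a.re - σ) * ‖Gamma (c - a - b)‖) := by
        have := sub_pos.2 ha
        gcongr
    _ = _ := by rw [div_div]; congr 1; ring

end EulerIntegral

section UniformBound

open Asymptotics Filter

/-- `Γ(a) Γ(b) ₂F₁(a, b; c; x) / Γ(c)` with `a = α + μ / 2`, `b = β + μ / 2`, `c = γ + μ`, as a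
function of `p = (μ, x)`. For `μ = -iλ`, `x = (cosh t)⁻²` and suitable `α`, `β`, `γ` this is the
non-elementary factor of `b_λ(t)`. -/
def gammaHG (α β γ : ℝ) (p : ℂ × ℝ) : ℂ :=
  Gamma (α + p.1 / 2) * Gamma (β + p.1 / 2) *
    regularizedGaussHGFun (α + p.1 / 2) (β + p.1 / 2) (γ + p.1) p.2

/-- The pairs `(μ, x)` with `Re μ ≥ s` and `0 ≤ x ≤ x₀`; `gammaHG` is estimated along its principal
filter, so that the implied constants are uniform on the region. -/
def uniformRegion (s x₀ : ℝ) : Set (ℂ × ℝ) :=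
  {μ : ℂ | s ≤ μ.re} ×ˢ Icc 0 x₀

variable {α β γ s x₀ : ℝ}

theorem gammaHG_contiguous {p : ℂ × ℝ} (hx : ‖p.2‖ < 1) :
    (1 - (p.2 : ℂ)) * gammaHG α β γ p =
      ((γ - (2 * γ + 1 - α - β) * p.2) + (1 - p.2) * p.1) * gammaHG α β (γ + 1) p +
        ((γ + 1 - α) + 1 / 2 * p.1) * ((γ + 1 - β) + 1 / 2 * p.1) * p.2 *
          gammaHG α β (γ + 2) p := by
  have h := regularizedGaussHGFun_contiguous (α + p.1 / 2) (β + p.1 / 2) (γ + p.1) (z := p.2)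
    (by rwa [norm_real])
  have e₁ : ((γ + 1 : ℝ) : ℂ) + p.1 = γ + p.1 + 1 := by push_cast; ring
  have e₂ : ((γ + 2 : ℝ) : ℂ) + p.1 = γ + p.1 + 2 := by push_cast; ring
  rw [gammaHG, gammaHG, gammaHG, e₁, e₂]
  linear_combination Gamma (α + p.1 / 2) * Gamma (β + p.1 / 2) * h

theorem norm_gammaHG_le_of_add_one_le {μ : ℂ} {x : ℝ} (hα : 0 < α + s / 2) (hβ : 0 < β + s / 2)
    (hγ : α + β + 1 ≤ γ) (hμ : s ≤ μ.re) (hx : x ∈ Ico (0 : ℝ) 1) :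
    ‖gammaHG α β γ (μ, x)‖ ≤
      (1 - x) ^ (-(α + s / 2)) * (1 + √(1 - x)) ^ (s - μ.re) /
        ((α + s / 2) * (β + s / 2) * ‖Gamma (γ - α - β)‖) := by
  have hre (r : ℝ) : (r + μ / 2 : ℂ).re = r + s / 2 + (μ.re - s) / 2 := by
    simp only [add_re, ofReal_re, div_ofNat_re]
    ring
  have hcab : (γ + μ - (α + μ / 2) - (β + μ / 2) : ℂ) = γ - α - β := by ring
  have h := norm_Gamma_mul_Gamma_mul_regularizedGaussHGFun_le (a := α + μ / 2) (b := β + μ / 2)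
    (c := γ + μ) (σ := (μ.re - s) / 2) (by linarith) (by rw [hre]; linarith)
    (by rw [hre]; linarith) (by rw [hre, hre, add_re, ofReal_re]; linarith) hx
  rwa [hre, hre, sub_add_cancel_right, add_sub_cancel_right, add_sub_cancel_right, hcab,
    show -2 * ((μ.re - s) / 2) = s - μ.re by ring] at h

theorem one_add_sqrt_rpow_sub_le (s r : ℝ) {x : ℝ} (hx : 0 ≤ x) :
    (1 + √(1 - x)) ^ (s - r) ≤ 2 ^ |s| * (1 + √(1 - x)) ^ (-r) := by
  have hroot0 : 0 ≤ √(1 - x) := Real.sqrt_nonneg _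
  have hroot1 : √(1 - x) ≤ 1 := Real.sqrt_le_one.2 (by linarith)
  have hs : (1 + √(1 - x)) ^ s ≤ 2 ^ |s| := calc
    (1 + √(1 - x)) ^ s ≤ (1 + √(1 - x)) ^ |s| :=
      Real.rpow_le_rpow_of_exponent_le (by linarith) (le_abs_self s)
    _ ≤ 2 ^ |s| := Real.rpow_le_rpow (by linarith) (by linarith) (abs_nonneg s)
  calc (1 + √(1 - x)) ^ (s - r) = (1 + √(1 - x)) ^ s * (1 + √(1 - x)) ^ (-r) := by
        rw [← Real.rpow_add (by linarith), sub_eq_add_neg s r]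
    _ ≤ 2 ^ |s| * (1 + √(1 - x)) ^ (-r) := by gcongr

theorem isBigO_gammaHG_of_add_one_le (hα : 0 < α + s / 2) (hβ : 0 < β + s / 2) (hx₀ : x₀ < 1)
    (hγ : α + β + 1 ≤ γ) :
    gammaHG α β γ =O[𝓟 (uniformRegion s x₀)] fun p => (1 + √(1 - p.2)) ^ (-p.1.re) := by
  refine isBigO_principal.2 ⟨(1 - x₀) ^ (-(α + s / 2)) * 2 ^ |s| /
    ((α + s / 2) * (β + s / 2) * ‖Gamma (γ - α - β)‖), ?_⟩
  rintro ⟨μ, x⟩ ⟨hμ, hx0, hx⟩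
  have hpow : (1 - x) ^ (-(α + s / 2)) ≤ (1 - x₀) ^ (-(α + s / 2)) :=
    Real.rpow_le_rpow_of_nonpos (by linarith) (by linarith) (by linarith)
  calc ‖gammaHG α β γ (μ, x)‖
      ≤ (1 - x) ^ (-(α + s / 2)) * (1 + √(1 - x)) ^ (s - μ.re) /
          ((α + s / 2) * (β + s / 2) * ‖Gamma (γ - α - β)‖) :=
        norm_gammaHG_le_of_add_one_le hα hβ hγ hμ ⟨hx0, hx.trans_lt hx₀⟩
    _ ≤ (1 - x₀) ^ (-(α + s / 2)) * (2 ^ |s| * (1 + √(1 - x)) ^ (-μ.re)) /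
          ((α + s / 2) * (β + s / 2) * ‖Gamma (γ - α - β)‖) := by
        have : 0 < 1 - x₀ := sub_pos.2 hx₀
        gcongr
        exact one_add_sqrt_rpow_sub_le s μ.re hx0
    _ = _ := by
        rw [Real.norm_of_nonneg (by positivity)]
        ring

theorem isBigO_const_add_mul_fst {S : Set (ℂ × ℝ)} {f g : ℂ × ℝ → ℂ}
    (hf : f =O[𝓟 S] fun _ => (1 : ℝ)) (hg : g =O[𝓟 S] fun _ => (1 : ℝ)) :
    (fun p => f p + g p * p.1) =O[𝓟 S] fun p => 1 + ‖p.1‖ := by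
  have hone : (fun _ => (1 : ℝ)) =O[𝓟 S] fun p : ℂ × ℝ => 1 + ‖p.1‖ :=
    .of_norm_le fun p => by
      rw [norm_one]
      linarith [norm_nonneg p.1]
  have hfst : (fun p : ℂ × ℝ => p.1) =O[𝓟 S] fun p => 1 + ‖p.1‖ :=
    .of_norm_le fun p => by linarith
  refine (hf.trans hone).add ?_
  simpa only [one_mul] using hg.mul hfst

theorem isBigO_ofReal_snd_uniformRegion :
    (fun p : ℂ × ℝ => (p.2 : ℂ)) =O[𝓟 (uniformRegion s x₀)] fun _ => (1 : ℝ) := by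
  refine isBigO_principal.2 ⟨x₀, fun p hp => ?_⟩
  rw [norm_real, Real.norm_of_nonneg hp.2.1, norm_one, mul_one]
  exact hp.2.2

theorem isBigO_inv_one_sub_snd_uniformRegion (hx₀ : x₀ < 1) :
    (fun p : ℂ × ℝ => (1 - (p.2 : ℂ))⁻¹) =O[𝓟 (uniformRegion s x₀)] fun _ => (1 : ℝ) := by
  refine isBigO_principal.2 ⟨(1 - x₀)⁻¹, fun p hp => ?_⟩
  have hpos : 0 < 1 - x₀ := sub_pos.2 hx₀
  have hle : 1 - x₀ ≤ 1 - p.2 := by linarith [hp.2.2]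
  rw [norm_inv, ← ofReal_one, ← ofReal_sub, norm_real, Real.norm_of_nonneg (hpos.le.trans hle),
    norm_one, mul_one]
  gcongr

theorem isBigO_gammaHG_of_contiguous {w : ℂ × ℝ → ℝ} (hx₀ : x₀ < 1)
    (h₁ : gammaHG α β (γ + 1) =O[𝓟 (uniformRegion s x₀)] w)
    (h₂ : gammaHG α β (γ + 2) =O[𝓟 (uniformRegion s x₀)] w) :
    gammaHG α β γ =O[𝓟 (uniformRegion s x₀)] fun p => (1 + ‖p.1‖) ^ 2 * w p := by
  set F := 𝓟 (uniformRegion s x₀)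
  have hcst (r : ℂ) : (fun _ : ℂ × ℝ => r) =O[F] fun _ => (1 : ℝ) :=
    isBigO_const_const r one_ne_zero F
  have hx : (fun p : ℂ × ℝ => (p.2 : ℂ)) =O[F] fun _ => (1 : ℝ) :=
    isBigO_ofReal_snd_uniformRegion
  have hlin : (fun p : ℂ × ℝ => 1 + ‖p.1‖) =O[F] fun p => (1 + ‖p.1‖) ^ 2 :=
    .of_norm_le fun p => by
      rw [Real.norm_of_nonneg (by positivity)]
      exact le_self_pow₀ (by linarith [norm_nonneg p.1]) two_ne_zero
  have hcoeff₁ := isBigO_const_add_mul_fst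
    ((hcst γ).sub (hx.const_mul_left (2 * γ + 1 - α - β))) ((hcst 1).sub hx)
  have hcoeff₂ := ((isBigO_const_add_mul_fst (hcst (γ + 1 - α)) (hcst (1 / 2))).mul
    (isBigO_const_add_mul_fst (hcst (γ + 1 - β)) (hcst (1 / 2)))).mul hx
  simp only [mul_one, ← sq] at hcoeff₂
  have hsum := (isBigO_inv_one_sub_snd_uniformRegion hx₀).mul
    (((hcoeff₁.trans hlin).mul h₁).add (hcoeff₂.mul h₂))
  simp only [one_mul] at hsum
  refine hsum.congr' (eventually_principal.2 fun p hp => ?_) .rfl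
  have hp1 : p.2 < 1 := hp.2.2.trans_lt hx₀
  have hne : 1 - (p.2 : ℂ) ≠ 0 := by exact_mod_cast (sub_pos.2 hp1).ne'
  beta_reduce
  rw [← gammaHG_contiguous (by rwa [Real.norm_of_nonneg hp.2.1]), inv_mul_cancel_left₀ hne]

theorem isBigO_gammaHG (hα : 0 < α + s / 2) (hβ : 0 < β + s / 2) (hx₀ : x₀ < 1) {n : ℕ}
    (hn : α + β + 1 ≤ γ + n) :
    gammaHG α β γ =O[𝓟 (uniformRegion s x₀)]
      fun p => (1 + ‖p.1‖) ^ (2 * n) * (1 + √(1 - p.2)) ^ (-p.1.re) := by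
  induction n generalizing γ with
  | zero => simpa using isBigO_gammaHG_of_add_one_le hα hβ hx₀ (by simpa using hn)
  | succ n ih =>
    rw [Nat.cast_succ] at hn
    refine (isBigO_gammaHG_of_contiguous hx₀ (ih (by linarith)) (ih (by linarith))).congr_right
      fun p => ?_
    rw [← mul_assoc, ← pow_add]
    ring_nf

theorem exists_norm_gammaHG_le (γ : ℝ) (hα : 0 < α + s / 2) (hβ : 0 < β + s / 2) (hx₀ : x₀ < 1) :
    ∃ (C : ℝ) (M : ℕ), 0 < C ∧ ∀ p ∈ uniformRegion s x₀,
      ‖gammaHG α β γ p‖ ≤ C * ((1 + ‖p.1‖) ^ M * (1 + √(1 - p.2)) ^ (-p.1.re)) := by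
  obtain ⟨n, hn⟩ := exists_nat_ge (α + β + 1 - γ)
  obtain ⟨C, hC, h⟩ := (isBigO_gammaHG (γ := γ) hα hβ hx₀ (by linarith : _ ≤ γ + n)).exists_pos
  refine ⟨C, 2 * n, hC, fun p hp => ?_⟩
  have hbound := isBigOWith_principal.1 h p hp
  rwa [Real.norm_of_nonneg (by positivity)] at hbound

end UniformBound

section JacobiFunctions

theorem rho_nonneg (m₁ m₂ : ℕ) : 0 ≤ rho m₁ m₂ := by
  unfold rho
  positivity

theorem rho_pos {m₁ : ℕ} (m₂ : ℕ) (hm₁ : 0 < m₁) : 0 < rho m₁ m₂ := by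
  unfold rho
  positivity

theorem one_sub_inv_cosh_sq (t : ℝ) : 1 - (Real.cosh t ^ 2)⁻¹ = Real.tanh t ^ 2 := by
  have := (Real.cosh_pos t).ne'
  rw [Real.tanh_eq_sinh_div_cosh, div_pow, Real.sinh_sq]
  field_simp

theorem two_cosh_mul_one_add_tanh (t : ℝ) :
    2 * Real.cosh t * (1 + Real.tanh t) = 2 * Real.exp t := by
  have := (Real.cosh_pos t).ne'
  rw [Real.tanh_eq_sinh_div_cosh, ← Real.cosh_add_sinh]
  field_simp

theorem two_rpow_mul_two_cosh_rpow_mul_le {ρ : ℝ} (s t : ℝ) (hρ : 0 ≤ ρ) :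
    (2 : ℝ) ^ (-ρ - 1 + s) * (2 * Real.cosh t) ^ (-s - ρ) * (1 + Real.tanh t) ^ (-s) ≤
      Real.exp (-(s + ρ) * t) := by
  have hcosh : 0 < 2 * Real.cosh t := by positivity
  have htanh : 0 < 1 + Real.tanh t := by
    refine pos_of_mul_pos_right ?_ hcosh.le
    rw [two_cosh_mul_one_add_tanh]
    positivity
  have hexp_le : Real.exp t ≤ 2 * Real.cosh t := by
    rw [Real.cosh_eq]
    linarith [Real.exp_pos (-t)]
  have htwo : (2 : ℝ) ^ (-ρ - 1) ≤ 1 :=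
    Real.rpow_le_one_of_one_le_of_nonpos one_le_two (by linarith)
  calc (2 : ℝ) ^ (-ρ - 1 + s) * (2 * Real.cosh t) ^ (-s - ρ) * (1 + Real.tanh t) ^ (-s)
      = (2 : ℝ) ^ (-ρ - 1 + s) * (2 * Real.cosh t * (1 + Real.tanh t)) ^ (-s) *
          (2 * Real.cosh t) ^ (-ρ) := by
        rw [Real.mul_rpow hcosh.le htanh.le, sub_eq_add_neg (-s), Real.rpow_add hcosh]
        ring
    _ = (2 : ℝ) ^ (-ρ - 1) * Real.exp t ^ (-s) * (2 * Real.cosh t) ^ (-ρ) := by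
        rw [two_cosh_mul_one_add_tanh, Real.mul_rpow zero_le_two (Real.exp_nonneg t), ← mul_assoc,
          ← Real.rpow_add zero_lt_two, add_neg_cancel_right]
    _ ≤ 1 * Real.exp t ^ (-s) * Real.exp t ^ (-ρ) := by
        gcongr ?_ * _ * ?_
        exact Real.rpow_le_rpow_of_nonpos (Real.exp_pos t) hexp_le (by linarith)
    _ = Real.exp (-(s + ρ) * t) := by
        rw [one_mul, ← Real.rpow_add (Real.exp_pos t), ← Real.exp_mul]
        ring_nf

theorem bfun_eq_mul_gammaHG (m₁ m₂ : ℕ) {l : ℂ} (hl : -1 < l.im) (t : ℝ) :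
    bfun m₁ m₂ l t = (2 : ℂ) ^ (-(rho m₁ m₂ : ℂ) - 1 - I * l) *
      ((2 * Real.cosh t : ℝ) : ℂ) ^ (I * l - (rho m₁ m₂ : ℂ)) /
        Gamma (((m₁ : ℂ) + (m₂ : ℂ) + 1) / 2) *
      gammaHG (rho m₁ m₂ / 2) ((m₁ + 2) / 4) 1 (-(I * l), (Real.cosh t ^ 2)⁻¹) := by
  have hre : 0 < (1 - I * l).re := by
    simp only [sub_re, one_re, mul_re, I_re, I_im, zero_mul, one_mul, zero_sub]
    linarith
  have hpole (k : ℕ) : 1 - I * l ≠ -k := by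
    intro h
    rw [h, neg_re, natCast_re, Left.neg_pos_iff] at hre
    exact hre.not_ge k.cast_nonneg
  have ha : ((rho m₁ m₂ / 2 : ℝ) + -(I * l) / 2 : ℂ) = ((rho m₁ m₂ : ℂ) - I * l) / 2 := by
    push_cast
    ring
  have hb : (((m₁ + 2) / 4 : ℝ) + -(I * l) / 2 : ℂ) = ((m₁ : ℂ) + 2) / 4 - I * l / 2 := by
    push_cast
    ring
  have hc : ((1 : ℝ) + -(I * l) : ℂ) = 1 - I * l := by
    push_cast
    ring
  rw [gammaHG, ha, hb, hc, ofReal_inv, ← hyp_div_Gamma_eq_regularizedGaussHGFun _ _ _ _ hpole, bfun,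
    Phi]
  ring

theorem norm_bfun (m₁ m₂ : ℕ) {l : ℂ} (hl : -1 < l.im) (t : ℝ) :
    ‖bfun m₁ m₂ l t‖ = (2 : ℝ) ^ (-rho m₁ m₂ - 1 + l.im) *
      (2 * Real.cosh t) ^ (-l.im - rho m₁ m₂) / ‖Gamma (((m₁ : ℂ) + (m₂ : ℂ) + 1) / 2)‖ *
      ‖gammaHG (rho m₁ m₂ / 2) ((m₁ + 2) / 4) 1 (-(I * l), (Real.cosh t ^ 2)⁻¹)‖ := by
  have htwo : ‖(2 : ℂ) ^ (-(rho m₁ m₂ : ℂ) - 1 - I * l)‖ = (2 : ℝ) ^ (-rho m₁ m₂ - 1 + l.im) := by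
    rw [← ofReal_ofNat, norm_cpow_eq_rpow_re_of_pos zero_lt_two]
    simp
  have hcosh : ‖((2 * Real.cosh t : ℝ) : ℂ) ^ (I * l - (rho m₁ m₂ : ℂ))‖ =
      (2 * Real.cosh t) ^ (-l.im - rho m₁ m₂) := by
    rw [norm_cpow_eq_rpow_re_of_pos (by positivity)]
    simp
  rw [bfun_eq_mul_gammaHG m₁ m₂ hl, norm_mul, norm_div, norm_mul, htwo, hcosh]

theorem inv_cosh_sq_lt_one {t : ℝ} (ht : t ≠ 0) : (Real.cosh t ^ 2)⁻¹ < 1 :=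
  inv_lt_one_of_one_lt₀ (one_lt_pow₀ (Real.one_lt_cosh.2 ht) two_ne_zero)

theorem inv_cosh_sq_antitoneOn : AntitoneOn (fun t => (Real.cosh t ^ 2)⁻¹) (Ici 0) := by
  intro t₀ ht₀ t ht h
  have hcosh : Real.cosh t₀ ≤ Real.cosh t := by
    rwa [Real.cosh_le_cosh, abs_of_nonneg ht₀, abs_of_nonneg ht]
  have := Real.cosh_pos t₀
  dsimp only
  gcongr

theorem sqrt_one_sub_inv_cosh_sq {t : ℝ} (ht : 0 ≤ t) :
    √(1 - (Real.cosh t ^ 2)⁻¹) = Real.tanh t := by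
  rw [one_sub_inv_cosh_sq, Real.sqrt_sq]
  rw [Real.tanh_eq_sinh_div_cosh]
  exact div_nonneg (Real.sinh_nonneg_iff.2 ht) (Real.cosh_pos t).le

theorem Gamma_half_add_ne_zero (m₁ m₂ : ℕ) : Gamma (((m₁ : ℂ) + (m₂ : ℂ) + 1) / 2) ≠ 0 := by
  have harg : ((m₁ : ℂ) + (m₂ : ℂ) + 1) / 2 = ((m₁ + m₂ + 1) / 2 : ℝ) := by
    push_cast
    rfl
  refine Gamma_ne_zero_of_re_pos ?_
  rw [harg, ofReal_re]
  positivity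

theorem exists_norm_gammaHG_inv_cosh_sq_le {α β s t₀ : ℝ} (γ : ℝ) (hα : 0 < α + s / 2)
    (hβ : 0 < β + s / 2) (ht₀ : 0 < t₀) :
    ∃ (C : ℝ) (M : ℕ), 0 < C ∧ ∀ l : ℂ, s ≤ l.im → ∀ t : ℝ, t₀ ≤ t →
      ‖gammaHG α β γ (-(I * l), (Real.cosh t ^ 2)⁻¹)‖ ≤
        C * ((1 + ‖l‖) ^ M * (1 + Real.tanh t) ^ (-l.im)) := by
  obtain ⟨C, M, hC, h⟩ := exists_norm_gammaHG_le γ hα hβ (inv_cosh_sq_lt_one ht₀.ne')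
  refine ⟨C, M, hC, fun l hl t ht => ?_⟩
  have ht0 : 0 ≤ t := ht₀.le.trans ht
  have hre : (-(I * l)).re = l.im := by simp
  have hmem : (-(I * l), (Real.cosh t ^ 2)⁻¹) ∈ uniformRegion s (Real.cosh t₀ ^ 2)⁻¹ :=
    ⟨hl.trans_eq hre.symm, by positivity, inv_cosh_sq_antitoneOn ht₀.le ht0 ht⟩
  simpa [hre, sqrt_one_sub_inv_cosh_sq ht0] using h _ hmem

theorem stmt2_general (m₁ m₂ : ℕ) {s t₀ : ℝ} (hs : -1 < s) (hsρ : -rho m₁ m₂ < s) (ht₀ : 0 < t₀) :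
    ∃ (C : ℝ) (M : ℕ), 0 < C ∧
      ∀ l : ℂ, s ≤ l.im → ∀ t : ℝ, t₀ ≤ t →
        ‖bfun m₁ m₂ l t‖ ≤ C * (1 + ‖l‖) ^ M * Real.exp (-(l.im + rho m₁ m₂) * t) := by
  have : (0 : ℝ) ≤ m₁ := m₁.cast_nonneg
  obtain ⟨C, M, hC, h⟩ := exists_norm_gammaHG_inv_cosh_sq_le (s := s) (α := rho m₁ m₂ / 2)
    (β := (m₁ + 2) / 4) 1 (by linarith) (by linarith) ht₀
  set G := ‖Gamma (((m₁ : ℂ) + (m₂ : ℂ) + 1) / 2)‖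
  have hG0 : 0 < G := norm_pos_iff.2 (Gamma_half_add_ne_zero m₁ m₂)
  refine ⟨C / G, M, by positivity, fun l hl t ht => ?_⟩
  set A := (2 : ℝ) ^ (-rho m₁ m₂ - 1 + l.im) * (2 * Real.cosh t) ^ (-l.im - rho m₁ m₂)
  have : 0 ≤ A := by positivity
  calc ‖bfun m₁ m₂ l t‖
      ≤ A / G * (C * ((1 + ‖l‖) ^ M * (1 + Real.tanh t) ^ (-l.im))) := by
        rw [norm_bfun m₁ m₂ (hs.trans_le hl)]
        gcongr
        exact h l hl t ht
    _ = C / G * (1 + ‖l‖) ^ M * (A * (1 + Real.tanh t) ^ (-l.im)) := by ring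
    _ ≤ C / G * (1 + ‖l‖) ^ M * Real.exp (-(l.im + rho m₁ m₂) * t) := by
        gcongr
        exact two_rpow_mul_two_cosh_rpow_mul_le l.im t (rho_nonneg m₁ m₂)

end JacobiFunctions

theorem stmt2 (m₁ m₂ : ℕ) (hm₁ : 1 ≤ m₁) :
    ∃ (C : ℝ) (M : ℕ), 0 < C ∧
      ∀ l : ℂ, 0 < l.im → ∀ t : ℝ, 1 / 2 ≤ t →
        ‖bfun m₁ m₂ l t‖ ≤ C * (1 + ‖l‖) ^ M * Real.exp (-(l.im + rho m₁ m₂) * t) := by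
  obtain ⟨C, M, hC, h⟩ := stmt2_general m₁ m₂ (s := 0) (t₀ := 1 / 2) (by norm_num)
    (neg_lt_zero.2 (rho_pos m₂ hm₁)) (by norm_num)
  exact ⟨C, M, hC, fun l hl => h l hl.le⟩

end
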